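/- For every k ≥ 1, if X ⊆ L_{1k2} satisfies D(X) < D(L_{1k2}), then |X| ≤ binomial(k+3,3) + 2. Moreover this bound is attained, e.g., by the set X_k = T_k(k+1) ∪ (⋃_{i=1}^{k+1} S_k(i)), where S_k(i) = {x ∈ L_{1k2} : x_1 = ... = x_{i-1} = 0, x_i = -1} and T_k(i) = {x ∈ L_{1k2} : x_1 = ... = x_{i-1} = 0, x_i = 1}. -/

import Mathlib

open scoped Classical

/-- `L m k l` is the set of vectors in `ℝ^(m+k+l)` with exactly `m` entries `-1`,
`k` entries `0`, and `l` entries `1`. -/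
def L (m k l : ℕ) : Set (EuclideanSpace ℝ (Fin (m+k+l))) :=
  {x | (Finset.univ.filter (fun i => x i = (-1:ℝ))).card = m ∧
       (Finset.univ.filter (fun i => x i = (0:ℝ))).card = k ∧
       (Finset.univ.filter (fun i => x i = (1:ℝ))).card = l}

/-- `Sset k i` is `S_k(i+1)` of the paper (0-indexed): vectors of `L 1 k 2` whose
first `i` coordinates are `0` and whose `(i+1)`-st coordinate is `-1`. -/
def Sset (k i : ℕ) : Set (EuclideanSpace ℝ (Fin (1+k+2))) :=
  {x ∈ L 1 k 2 | (∀ j : Fin (1+k+2), (j : ℕ) < i → x j = 0) ∧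
    (∀ j : Fin (1+k+2), (j : ℕ) = i → x j = -1)}

/-- `Tset k i` is `T_k(i+1)` of the paper (0-indexed): vectors of `L 1 k 2` whose
first `i` coordinates are `0` and whose `(i+1)`-st coordinate is `1`. -/
def Tset (k i : ℕ) : Set (EuclideanSpace ℝ (Fin (1+k+2))) :=
  {x ∈ L 1 k 2 | (∀ j : Fin (1+k+2), (j : ℕ) < i → x j = 0) ∧
    (∀ j : Fin (1+k+2), (j : ℕ) = i → x j = 1)}

/-- `Xk k` is the paper's `X_k = T_k(k+1) ∪ ⋃_{i=1}^{k+1} S_k(i)`. -/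
def Xk (k : ℕ) : Set (EuclideanSpace ℝ (Fin (1+k+2))) :=
  Tset k k ∪ ⋃ i ∈ Finset.range (k+1), Sset k i


lemma sum_distinct {V : Type*} [Fintype V] (A : Finset V) :
    ∑ a ∈ A, ∑ b ∈ A, ∑ c ∈ A, (if a ≠ b ∧ a ≠ c ∧ b ≠ c then (1:ℤ) else 0)
      = (A.card : ℤ) * (A.card - 1) * (A.card - 2) := by
  have h : ∀ a b c : V, (if a ≠ b ∧ a ≠ c ∧ b ≠ c then (1:ℤ) else 0)
      = 1 - (if a = b then 1 else 0) - (if a = c then 1 else 0) - (if b = c then 1 else 0)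
        + 2 * (if a = b then (if b = c then 1 else 0) else 0) := by
    intro a b c
    by_cases h1 : a = b
    · by_cases h2 : b = c <;> simp [h1, h2]
    · by_cases h2 : b = c
      · subst h2; simp [h1]
      · by_cases h3 : a = c
        · subst h3; simp [h1, h2]
        · simp [h1, h2, h3]
  simp only [h, Finset.sum_add_distrib, Finset.sum_sub_distrib, ← Finset.mul_sum]
  have e1 : ∑ a ∈ A, ∑ b ∈ A, ∑ c ∈ A, (if a = b then (if b = c then (1:ℤ) else 0) else 0)
      = A.card := by
    have : ∀ a ∈ A, ∑ b ∈ A, ∑ c ∈ A, (if a = b then (if b = c then (1:ℤ) else 0) else 0) = 1 := by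
      intro a ha
      rw [Finset.sum_eq_single a]
      · simp [ha]
      · intro b _ hb
        simp [Ne.symm hb]
      · exact fun h => absurd ha h
    rw [Finset.sum_congr rfl this]; simp
  have e2 : ∑ a ∈ A, ∑ b ∈ A, ∑ c ∈ A, (if a = b then (1:ℤ) else 0)
      = (A.card : ℤ) * A.card := by
    have : ∀ a ∈ A, ∑ b ∈ A, ∑ c ∈ A, (if a = b then (1:ℤ) else 0) = A.card := by
      intro a ha
      rw [Finset.sum_eq_single a]
      · simp
      · intro b _ hb
        simp [Ne.symm hb]
      · exact fun h => absurd ha h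
    rw [Finset.sum_congr rfl this]; simp
  have e3 : ∑ a ∈ A, ∑ b ∈ A, ∑ c ∈ A, (if b = c then (1:ℤ) else 0)
      = (A.card : ℤ) * A.card := by
    have : ∀ b ∈ A, ∑ c ∈ A, (if b = c then (1:ℤ) else 0) = 1 := by
      intro a ha
      simp [ha]
    simp only [Finset.sum_congr rfl this]; simp
  have e4 : ∑ a ∈ A, ∑ b ∈ A, ∑ c ∈ A, (if a = c then (1:ℤ) else 0)
      = (A.card : ℤ) * A.card := by
    have : ∀ b ∈ A, ∑ c ∈ A, (if b = c then (1:ℤ) else 0) = 1 := by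
      intro a ha
      simp [ha]
    rw [Finset.sum_comm]
    have : ∀ b ∈ A, ∑ a ∈ A, ∑ c ∈ A, (if a = c then (1:ℤ) else 0) = A.card := by
      intro b _
      rw [Finset.sum_congr rfl this]; simp
    rw [Finset.sum_congr rfl this]; simp
  rw [e1, e2, e3, e4]
  simp
  ring

lemma prop_ineq (p1 p2 p3 q1 q2 q3 : Prop)
    (f1 : p1 → q1 → q2 → q3 → p2 ∧ p3) (f2 : p2 → q2 → q1 → q3 → p1 ∧ p3)
    (f3 : p3 → q3 → q1 → q2 → p1 ∧ p2) :
    (if p1 then (1:ℤ) else 0) + (if p2 then (1:ℤ) else 0)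
        + (if p3 then (1:ℤ) else 0) - 1 ≤
      (if p1 ∧ p2 then (1:ℤ) else 0) + (if p2 ∧ p3 then (1:ℤ) else 0)
        + (if p1 ∧ p3 then (1:ℤ) else 0)
        - (if q1 then if q2 then if q3 then 1 else 0 else 0 else 0) := by
  by_cases q : q1 ∧ q2 ∧ q3
  · obtain ⟨h1, h2, h3⟩ := q
    by_cases p1 <;> by_cases p2 <;> by_cases p3 <;> simp_all
  · have : (if q1 then if q2 then if q3 then (1:ℤ) else 0 else 0 else 0) = 0 := by
      split_ifs <;> simp_all
    rw [this]
    clear this f1 f2 f3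
    by_cases p1 <;> by_cases p2 <;> by_cases p3 <;> simp [*]

lemma comb_count {V : Type*} [Fintype V] (P : V → V → V → Prop)
    (hs : ∀ a b c, P a b c → P a c b)
    (hn : ∀ a b c, P a b c → a ≠ b ∧ b ≠ c)
    (ha : ∀ a b c d, P a b c → P b a d → c = d)
    (hstar : ∀ a b c d, P a b c → P b a c → d ≠ a → d ≠ b → d ≠ c → ∃ e, P d a e) :
    3 * ∑ a : V, ∑ b : V, ∑ c : V, (if P a b c then (1:ℤ) else 0) ≤
      (Fintype.card V : ℤ) * (Fintype.card V - 1) * (Fintype.card V - 2) + 12 := by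
  set A : Finset V := Finset.univ.filter (fun a => ∃ b c, P a b c ∧ P b a c) with hA
  have mA : ∀ a, a ∈ A ↔ ∃ b c, P a b c ∧ P b a c := by intro a; simp [hA]
  -- mutual pairs are locked
  have hmut : ∀ a b c d, P a b c → P b a d → P a b c ∧ P b a c := by
    intro a b c d h1 h2
    have := ha _ _ _ _ h1 h2
    subst this
    exact ⟨h1, h2⟩
  have key : ∀ a b a' b' c', P a b a' → P b a a' → P a' b' c' → P b' a' c' →
      ∃ c, P a a' c ∧ P a' a c := by
    intro a b a' b' c' h1 h2 h3 h4
    by_contra hcon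
    have N : ∀ e, ¬ P a' a e := fun e he => hcon ⟨b, hmut _ _ _ _ (hs _ _ _ h1) he⟩
    have n1 := hn _ _ _ h1
    have n3 := hn _ _ _ h3
    have hb'a : b' ≠ a := by rintro rfl; exact N _ h3
    have hc'a : c' ≠ a := by rintro rfl; exact N _ (hs _ _ _ h3)
    have hb'b : b' ≠ b := by
      rintro rfl
      have := ha _ _ _ _ (hs _ _ _ h2) h3
      exact hc'a this.symm
    obtain ⟨e, he⟩ := hstar a b a' b' h1 h2 hb'a hb'b n3.1.symm
    have haa' : a ≠ a' := (hn _ _ _ (hs _ _ _ h1)).1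
    obtain ⟨f, hf⟩ := hstar b' a' c' a h4 h3 hb'a.symm haa' hc'a.symm
    have hef := ha _ _ _ _ he hf
    subst hef
    by_cases hea : e = a'
    · subst hea
      have := ha _ _ _ _ (hs _ _ _ he) h3
      exact hc'a this.symm
    · obtain ⟨g, hg⟩ := hstar a b' e a' hf he haa'.symm n3.1 (Ne.symm hea)
      exact N _ hg
  have hlock : ∀ a a', a ∈ A → a' ∈ A → a ≠ a' → ∃ c, P a a' c ∧ P a' a c := by
    intro a a' h h' hne
    obtain ⟨b, c, h1, h2⟩ := (mA a).1 h
    obtain ⟨b', c', h3, h4⟩ := (mA a').1 h'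
    by_cases e1 : a' = c
    · subst e1; exact key _ _ _ _ _ h1 h2 h3 h4
    by_cases e2 : a = c'
    · subst e2
      obtain ⟨c, x, y⟩ := key _ _ _ _ _ h3 h4 h1 h2
      exact ⟨c, y, x⟩
    by_cases e3 : a' = b
    · subst e3; exact ⟨c, h1, h2⟩
    by_cases e4 : a = b'
    · subst e4; exact ⟨c', h4, h3⟩
    obtain ⟨e, he⟩ := hstar a b c a' h1 h2 hne.symm e3 e1
    obtain ⟨f, hf⟩ := hstar a' b' c' a h3 h4 hne e4 e2
    exact ⟨f, hmut _ _ _ _ hf he⟩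
  -- a nonempty triple inside A is full
  have hfull : ∀ a b c, P a b c → a ∈ A → b ∈ A → c ∈ A → P b a c ∧ P c a b := by
    intro a b c h h1 h2 h3
    have n1 := hn _ _ _ h
    have n2 := hn _ _ _ (hs _ _ _ h)
    obtain ⟨d, x, y⟩ := hlock a b h1 h2 n1.1
    have := ha _ _ _ _ h y
    subst this
    obtain ⟨d, x', y'⟩ := hlock a c h1 h3 n2.1
    have := ha _ _ _ _ (hs _ _ _ h) y'
    subst this
    exact ⟨y, y'⟩
  have mA1 : ∀ a b c, P a b c → P b a c → a ∈ A ∧ b ∈ A := fun a b c x y =>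
    ⟨(mA a).2 ⟨b, c, x, y⟩, (mA b).2 ⟨a, c, y, x⟩⟩
  have point : ∀ a b c : V,
      (if P a b c then (1:ℤ) else 0) + (if P b a c then (1:ℤ) else 0)
        + (if P c a b then (1:ℤ) else 0) - (if a ≠ b ∧ a ≠ c ∧ b ≠ c then (1:ℤ) else 0) ≤
      (if P a b c ∧ P b a c then (1:ℤ) else 0) + (if P b c a ∧ P c b a then (1:ℤ) else 0)
        + (if P a c b ∧ P c a b then (1:ℤ) else 0)
        - (if a ∈ A then if b ∈ A then if c ∈ A then
            (if a ≠ b ∧ a ≠ c ∧ b ≠ c then (1:ℤ) else 0) else 0 else 0 else 0) := by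
    intro a b c
    by_cases hd : a ≠ b ∧ a ≠ c ∧ b ≠ c
    · have s1 : P a c b ↔ P a b c := ⟨hs _ _ _, hs _ _ _⟩
      have s2 : P b c a ↔ P b a c := ⟨hs _ _ _, hs _ _ _⟩
      have s3 : P c b a ↔ P c a b := ⟨hs _ _ _, hs _ _ _⟩
      rw [s1, s2, s3]
      have f1 := hfull a b c
      have f2 := hfull b a c
      have f3 := hfull c a b
      rw [s3] at f2
      rw [s1, s2] at f3
      simp only [if_pos hd]
      convert prop_ineq _ _ _ _ _ _ f1 f2 f3
    · have z1 : ¬ P a b c := fun h => hd ⟨(hn _ _ _ h).1, (hn _ _ _ (hs _ _ _ h)).1, (hn _ _ _ h).2⟩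
      have z2 : ¬ P b a c := fun h => hd ⟨(hn _ _ _ h).1.symm, (hn _ _ _ h).2, (hn _ _ _ (hs _ _ _ h)).1⟩
      have z3 : ¬ P c a b := fun h => hd ⟨(hn _ _ _ h).2, (hn _ _ _ h).1.symm, (hn _ _ _ (hs _ _ _ h)).1.symm⟩
      have z4 : ¬ P b c a := fun h => z2 (hs _ _ _ h)
      simp only [z1, z2, z3, z4, hd]
      simp
  have hsum := Finset.sum_le_sum fun a (_ : a ∈ (Finset.univ : Finset V)) =>
    Finset.sum_le_sum fun b (_ : b ∈ (Finset.univ : Finset V)) =>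
    Finset.sum_le_sum fun c (_ : c ∈ (Finset.univ : Finset V)) => point a b c
  simp only [Finset.sum_add_distrib, Finset.sum_sub_distrib] at hsum
  have p2 : ∑ a : V, ∑ b : V, ∑ c : V, (if P b a c then (1:ℤ) else 0)
      = ∑ a : V, ∑ b : V, ∑ c : V, (if P a b c then (1:ℤ) else 0) := Finset.sum_comm
  have p3 : ∑ a : V, ∑ b : V, ∑ c : V, (if P c a b then (1:ℤ) else 0)
      = ∑ a : V, ∑ b : V, ∑ c : V, (if P a b c then (1:ℤ) else 0) := by
    rw [← p2]
    exact Finset.sum_congr rfl fun a _ => Finset.sum_comm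
  have l0 : ∑ a : V, ∑ b : V, ∑ c : V, (if P a b c ∧ P b a c then (1:ℤ) else 0)
      ≤ (A.card : ℤ) * (A.card - 1) := by
    have h1 : ∀ a b : V, ∑ c : V, (if P a b c ∧ P b a c then (1:ℤ) else 0) ≤
        (if a ∈ A then if b ∈ A then (1 - if a = b then (1:ℤ) else 0) else 0 else 0) := by
      intro a b
      by_cases hex : ∃ c, P a b c ∧ P b a c
      · obtain ⟨c, x, y⟩ := hex
        have := mA1 _ _ _ x y
        rw [Finset.sum_eq_single c]
        · simp [x, y, this.1, this.2, (hn _ _ _ x).1]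
        · intro d _ hd
          rw [if_neg]
          rintro ⟨x', y'⟩
          exact hd (ha _ _ _ _ x' y)
        · simp
      · push Not at hex
        rw [Finset.sum_eq_zero]
        · split_ifs <;> simp
        · intro c _
          rw [if_neg]
          exact fun h => hex c h.1 h.2
    refine (Finset.sum_le_sum fun a _ => Finset.sum_le_sum fun b _ => h1 a b).trans ?_
    have : ∀ a : V, ∑ b : V, (if a ∈ A then if b ∈ A then (1 - if a = b then (1:ℤ) else 0) else 0 else 0)
       = if a ∈ A then (A.card - 1 : ℤ) else 0 := by
      intro a
      split_ifs with h
      · rw [← Finset.sum_filter]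
        simp [Finset.sum_sub_distrib, h]
      · simp
    simp only [this]
    rw [← Finset.sum_filter]
    simp
    linarith
  have l2 : ∑ a : V, ∑ b : V, ∑ c : V, (if P b c a ∧ P c b a then (1:ℤ) else 0)
      = ∑ a : V, ∑ b : V, ∑ c : V, (if P a b c ∧ P b a c then (1:ℤ) else 0) := by
    rw [Finset.sum_comm]
    exact Finset.sum_congr rfl fun a _ => Finset.sum_comm
  have l3 : ∑ a : V, ∑ b : V, ∑ c : V, (if P a c b ∧ P c a b then (1:ℤ) else 0)
      = ∑ a : V, ∑ b : V, ∑ c : V, (if P a b c ∧ P b a c then (1:ℤ) else 0) :=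
    Finset.sum_congr rfl fun a _ => Finset.sum_comm
  have d0 := sum_distinct (Finset.univ : Finset V)
  have d1 : ∑ a : V, ∑ b : V, ∑ c : V, (if a ∈ A then if b ∈ A then if c ∈ A then
            (if a ≠ b ∧ a ≠ c ∧ b ≠ c then (1:ℤ) else 0) else 0 else 0 else 0)
      = (A.card : ℤ) * (A.card - 1) * (A.card - 2) := by
    rw [← sum_distinct A]
    have i1 : ∀ f : V → ℤ, ∑ a : V, (if a ∈ A then f a else 0) = ∑ a ∈ A, f a := by
      intro f
      rw [← Finset.sum_filter]; simp
    have i2 : ∀ (p : Prop) [Decidable p] (f : V → ℤ), ∑ a : V, (if p then f a else 0)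
        = if p then ∑ a : V, f a else 0 := by
      intro p _ f
      by_cases h : p <;> simp [h]
    calc _ = ∑ a : V, (if a ∈ A then ∑ b : V, (if b ∈ A then ∑ c : V, (if c ∈ A then
            (if a ≠ b ∧ a ≠ c ∧ b ≠ c then (1:ℤ) else 0) else 0) else 0) else 0) := by
          refine Finset.sum_congr rfl fun a _ => ?_
          rw [← i2]
          refine Finset.sum_congr rfl fun b _ => ?_
          rw [← i2, ← i2]
      _ = _ := by
          rw [i1]
          refine Finset.sum_congr rfl fun a _ => ?_
          rw [i1]
          refine Finset.sum_congr rfl fun b _ => ?_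
          rw [i1]
  rw [p2, p3, l2, l3, d0, d1, Finset.card_univ] at hsum
  have fin : 3 * ((A.card : ℤ) * (A.card - 1)) - (A.card : ℤ) * (A.card - 1) * (A.card - 2) ≤ 12 := by
    generalize A.card = m
    rcases lt_or_ge m 6 with h | h
    · interval_cases m <;> norm_num
    · have h' : (6:ℤ) ≤ m := by exact_mod_cast h
      nlinarith [mul_nonneg (show (0:ℤ) ≤ m by positivity) (sub_nonneg.2 h'), mul_nonneg (mul_nonneg (show (0:ℤ) ≤ m by positivity) (sub_nonneg.2 h')) (sub_nonneg.2 h')]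
  linarith

noncomputable def lockSet {V : Type*} [Fintype V] (S : Finset (V × V × V)) : Finset (V × V) :=
  Finset.univ.filter fun p => (∃ z, (p.1, p.2, z) ∈ S) ∧ ∃ z, (p.2, p.1, z) ∈ S

lemma comb_main {V : Type*} [Fintype V] (m : ℕ) : ∀ (S : Finset (V × V × V)),
    (lockSet S).card = m →
    (∀ a b c, (a, b, c) ∈ S → (a, c, b) ∈ S) →
    (∀ a b c, (a, b, c) ∈ S → a ≠ b ∧ b ≠ c) →
    (∀ a b c d, (a, b, c) ∈ S → (b, a, d) ∈ S → c = d) →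
    3 * (S.card : ℤ) ≤
      (Fintype.card V : ℤ) * (Fintype.card V - 1) * (Fintype.card V - 2) + 12 := by
  induction m using Nat.strong_induction_on with
  | _ m ih =>
  intro S hm hs hn ha
  by_cases hstar : ∀ a b c d, (a, b, c) ∈ S → (b, a, c) ∈ S → d ≠ a → d ≠ b → d ≠ c →
      ∃ e, (d, a, e) ∈ S
  · have := comb_count (fun a b c => (a, b, c) ∈ S) hs hn ha hstar
    have h2 : ∑ a : V, ∑ b : V, ∑ c : V, (if (a, b, c) ∈ S then (1:ℤ) else 0) = S.card := by
      have : ∑ a : V, ∑ b : V, ∑ c : V, (if (a, b, c) ∈ S then (1:ℤ) else 0)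
        = ∑ t : V × V × V, (if t ∈ S then (1:ℤ) else 0) := by
        simp only [Fintype.sum_prod_type]
      rw [this]
      simp
    rw [← h2]
    convert this
  · push Not at hstar
    obtain ⟨a, b, c, d, h1, h2, da, db, dc, hd⟩ := hstar
    have nab := (hn _ _ _ h1).1
    have nbc := (hn _ _ _ h1).2
    have nac := (hn _ _ _ h2).2
    set R : Finset (V × V × V) := {(b, a, c), (b, c, a)} with hR
    set Q : Finset (V × V × V) := {(a, b, d), (a, d, b)} with hQ
    have hmem : ∀ x y z, (x, y, z) ∈ (S \ R) ∪ Q ↔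
      ((x, y, z) ∈ S ∧ ¬ (x = b ∧ y = a ∧ z = c) ∧ ¬ (x = b ∧ y = c ∧ z = a)) ∨
        (x = a ∧ y = b ∧ z = d) ∨ (x = a ∧ y = d ∧ z = b) := by
      intro x y z
      simp [hR, hQ, Prod.ext_iff]
      rw [← or_assoc, or_comm]
    have hRS : R ⊆ S := by
      intro t ht
      simp only [hR, Finset.mem_insert, Finset.mem_singleton] at ht
      rcases ht with rfl | rfl
      · exact h2
      · exact hs _ _ _ h2
    have abd : (a, b, d) ∉ S := fun h => dc (ha _ _ _ _ h h2)
    have adb : (a, d, b) ∉ S := fun h => abd (hs _ _ _ h)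
    have hdisj : Disjoint (S \ R) Q := by
      rw [Finset.disjoint_left]
      intro t ht hq
      simp only [hQ, Finset.mem_insert, Finset.mem_singleton] at hq
      have := (Finset.mem_sdiff.1 ht).1
      rcases hq with rfl | rfl
      · exact abd this
      · exact adb this
    have cR : R.card = 2 := by
      rw [hR, Finset.card_pair]; simp [nac]
    have cQ : Q.card = 2 := by
      rw [hQ, Finset.card_pair]; simp [Ne.symm db]
    have hcard : ((S \ R) ∪ Q).card = S.card := by
      have := Finset.card_le_card hRS
      rw [Finset.card_union_of_disjoint hdisj, Finset.card_sdiff_of_subset hRS]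
      omega
    rw [← hcard]
    have nba : ∀ z, (b, a, z) ∉ (S \ R) ∪ Q := by
      intro z hz
      rcases (hmem _ _ _).1 hz with ⟨h, h', _⟩ | ⟨h, _⟩ | ⟨h, _⟩
      · exact h' ⟨rfl, rfl, (ha _ _ _ _ h1 h).symm⟩
      · exact nab h.symm
      · exact nab h.symm
    have nda : ∀ z, (d, a, z) ∉ (S \ R) ∪ Q := by
      intro z hz
      rcases (hmem _ _ _).1 hz with ⟨h, h', _⟩ | ⟨h, _⟩ | ⟨h, _⟩
      · exact hd _ h
      · exact da h
      · exact da h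
    have hboth : ∀ x y z w, (x, y, z) ∈ (S \ R) ∪ Q → (y, x, w) ∈ (S \ R) ∪ Q →
        (x, y, z) ∈ S ∧ (y, x, w) ∈ S := by
      intro x y z w h3 h4
      rcases (hmem _ _ _).1 h3 with ⟨h, _⟩ | ⟨rfl, rfl, _⟩ | ⟨rfl, rfl, _⟩
      · rcases (hmem _ _ _).1 h4 with ⟨h', _⟩ | ⟨rfl, rfl, _⟩ | ⟨rfl, rfl, _⟩
        · exact ⟨h, h'⟩
        · exact absurd h3 (nba _)
        · exact absurd h3 (nda _)
      · exact absurd h4 (nba _)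
      · exact absurd h4 (nda _)
    refine ih _ ?_ _ rfl ?_ ?_ ?_
    · rw [← hm]
      apply Finset.card_lt_card
      rw [Finset.ssubset_iff_of_subset]
      · refine ⟨(a, b), ?_, ?_⟩
        · simp only [lockSet, Finset.mem_filter, Finset.mem_univ, true_and]
          exact ⟨⟨c, h1⟩, c, h2⟩
        · simp only [lockSet, Finset.mem_filter, Finset.mem_univ, true_and]
          rintro ⟨_, z, hz⟩
          exact nba z hz
      · rintro ⟨x, y⟩
        simp only [lockSet, Finset.mem_filter, Finset.mem_univ, true_and]
        rintro ⟨⟨z, hz⟩, w, hw⟩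
        have := hboth _ _ _ _ hz hw
        exact ⟨⟨z, this.1⟩, w, this.2⟩
    · intro x y z
      simp only [hmem]
      rintro (⟨h, h', h''⟩ | ⟨x1, x2, x3⟩ | ⟨x1, x2, x3⟩)
      · exact Or.inl ⟨hs _ _ _ h, fun t => h'' ⟨t.1, t.2.2, t.2.1⟩, fun t => h' ⟨t.1, t.2.2, t.2.1⟩⟩
      · exact Or.inr (Or.inr ⟨x1, x3, x2⟩)
      · exact Or.inr (Or.inl ⟨x1, x3, x2⟩)
    · intro x y z h3
      rcases (hmem _ _ _).1 h3 with ⟨h, _⟩ | ⟨rfl, rfl, rfl⟩ | ⟨rfl, rfl, rfl⟩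
      · exact hn _ _ _ h
      · exact ⟨nab, db.symm⟩
      · exact ⟨da.symm, db⟩
    · intro x y z w h3 h4
      have := hboth _ _ _ _ h3 h4
      exact ha _ _ _ _ this.1 this.2

noncomputable def vec {n : ℕ} (a b c : Fin n) : EuclideanSpace ℝ (Fin n) :=
  WithLp.toLp 2 fun i => if i = a then -1 else if i = b ∨ i = c then 1 else 0

lemma vec_apply {n : ℕ} (a b c i : Fin n) :
    vec a b c i = if i = a then (-1:ℝ) else if i = b ∨ i = c then 1 else 0 := rfl

lemma vec_swap {n : ℕ} (a b c : Fin n) : vec a b c = vec a c b := by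
  ext i
  simp only [vec_apply, or_comm]

lemma mem_L_of_vec {k : ℕ} (a b c : Fin (1+k+2)) (hab : a ≠ b) (hac : a ≠ c) (hbc : b ≠ c) :
    vec a b c ∈ L 1 k 2 := by
  have h1 : (Finset.univ.filter (fun i => vec a b c i = (-1:ℝ))) = {a} := by
    ext i
    rw [Finset.mem_filter, vec_apply]
    simp only [Finset.mem_univ, true_and, Finset.mem_singleton]
    split_ifs with h h'
    · simp [h]
    · simp only [h, iff_false]; norm_num
    · simp [h]
  have h2 : (Finset.univ.filter (fun i => vec a b c i = (1:ℝ))) = {b, c} := by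
    ext i
    rw [Finset.mem_filter, vec_apply]
    simp only [Finset.mem_univ, true_and, Finset.mem_singleton, Finset.mem_insert]
    split_ifs with h h'
    · subst h; simp only [hab, hac, or_self, iff_false]; norm_num
    · simp [h']
    · simp [h']
  have h3 : (Finset.univ.filter (fun i => vec a b c i = (0:ℝ))) = ({a, b, c} : Finset _)ᶜ := by
    ext i
    rw [Finset.mem_filter, vec_apply]
    simp only [Finset.mem_univ, true_and, Finset.mem_singleton,
      Finset.mem_insert, Finset.mem_compl]
    split_ifs with h h'
    · simp [h]
    · simp [h']
    · simp [h, h']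
  refine ⟨?_, ?_, ?_⟩
  · rw [h1]; exact Finset.card_singleton a
  · have : (({a, b, c} : Finset (Fin (1+k+2)))ᶜ).card = k := by
      rw [Finset.card_compl, Finset.card_eq_three.2 ⟨a, b, c, hab, hac, hbc, rfl⟩,
        Fintype.card_fin]
      omega
    exact (congrArg Finset.card h3).trans this
  · exact (congrArg Finset.card h2).trans (Finset.card_pair hbc)

lemma exists_vec_of_mem_L {k : ℕ} (x : EuclideanSpace ℝ (Fin (1+k+2))) (hx : x ∈ L 1 k 2) :
    ∃ a b c, a ≠ b ∧ a ≠ c ∧ b ≠ c ∧ x = vec a b c := by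
  obtain ⟨h1, h2, h3⟩ := hx
  obtain ⟨a, ha⟩ := Finset.card_eq_one.1 h1
  obtain ⟨b, c, hbc, hb⟩ := Finset.card_eq_two.1 h3
  have xa : ∀ i, x i = -1 ↔ i = a := by
    intro i
    have := congrArg (fun s => i ∈ s) ha
    simpa using this
  have xb : ∀ i, x i = 1 ↔ i = b ∨ i = c := by
    intro i
    have := congrArg (fun s => i ∈ s) hb
    simpa using this
  have va := (xa a).2 rfl
  have vb := (xb b).2 (Or.inl rfl)
  have vc := (xb c).2 (Or.inr rfl)
  have hab : a ≠ b := by rintro rfl; rw [va] at vb; norm_num at vb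
  have hac : a ≠ c := by rintro rfl; rw [va] at vc; norm_num at vc
  have hz : (Finset.univ.filter (fun i => x i = (0:ℝ))) = ({a, b, c} : Finset _)ᶜ := by
    apply Finset.eq_of_subset_of_card_le
    · intro i hi
      simp only [Finset.mem_filter, Finset.mem_univ, true_and] at hi
      simp only [Finset.mem_compl, Finset.mem_insert, Finset.mem_singleton]
      rintro (rfl | rfl | rfl) <;> simp_all
    · rw [Finset.card_compl, Finset.card_eq_three.2 ⟨a, b, c, hab, hac, hbc, rfl⟩, h2,
        Fintype.card_fin]
      omega
  refine ⟨a, b, c, hab, hac, hbc, ?_⟩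
  ext i
  rw [vec_apply]
  split_ifs with h h'
  · exact (xa i).2 h
  · exact (xb i).2 h'
  · have : i ∈ ({a, b, c} : Finset (Fin (1+k+2)))ᶜ := by
      push Not at h'
      simp [h, h'.1, h'.2]
    rw [← hz] at this
    simpa using this

lemma sum_vec {n : ℕ} (a b c : Fin n) (hab : a ≠ b) (hac : a ≠ c) (hbc : b ≠ c) (f : Fin n → ℝ) :
    ∑ i, vec a b c i * f i = - f a + f b + f c := by
  have : ∀ i, vec a b c i * f i = - (if i = a then f i else 0) + (if i = b then f i else 0)
      + (if i = c then f i else 0) := by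
    intro i
    rw [vec_apply]
    by_cases h1 : i = a
    · subst h1; simp [hab, hac]
    by_cases h2 : i = b
    · subst h2; simp [h1, hbc]
    by_cases h3 : i = c
    · subst h3; simp [h1, h2]
    simp [h1, h2, h3]
  simp only [this, Finset.sum_add_distrib, Finset.sum_neg_distrib]
  simp

lemma dist_sq_vec {n : ℕ} (a b c a' b' c' : Fin n) (hab : a ≠ b) (hac : a ≠ c) (hbc : b ≠ c)
    (hab' : a' ≠ b') (hac' : a' ≠ c') (hbc' : b' ≠ c') :
    dist (vec a b c) (vec a' b' c') ^ 2 =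
      6 - 2 * (- vec a' b' c' a + vec a' b' c' b + vec a' b' c' c) := by
  rw [EuclideanSpace.dist_eq, Real.sq_sqrt (Finset.sum_nonneg fun i _ => sq_nonneg _)]
  have : ∀ i, dist (vec a b c i) (vec a' b' c' i) ^ 2 = vec a b c i * vec a b c i
      - 2 * (vec a b c i * vec a' b' c' i) + vec a' b' c' i * vec a' b' c' i := by
    intro i
    rw [Real.dist_eq, sq_abs]; ring
  simp only [this, Finset.sum_add_distrib, Finset.sum_sub_distrib, ← Finset.mul_sum]
  rw [sum_vec a b c hab hac hbc, sum_vec a b c hab hac hbc, sum_vec a' b' c' hab' hac' hbc']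
  have e1 : ∀ a b c : Fin n, a ≠ b → a ≠ c → b ≠ c →
      - vec a b c a + vec a b c b + vec a b c c = 3 := by
    intro a b c h1 h2 h3
    simp [vec_apply, h1.symm, h2.symm]; norm_num
  rw [e1 a b c hab hac hbc, e1 a' b' c' hab' hac' hbc']
  ring

lemma dist_cases {n : ℕ} (a b c a' b' c' : Fin n) (hab : a ≠ b) (hac : a ≠ c) (hbc : b ≠ c)
    (hab' : a' ≠ b') (hac' : a' ≠ c') (hbc' : b' ≠ c') :
    dist (vec a b c) (vec a' b' c') ^ 2 ≤ 8 ∨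
     (dist (vec a b c) (vec a' b' c') ^ 2 = 10 ∧
      (a = b' ∨ a = c') ∧ ((b = a' ∧ c ≠ b' ∧ c ≠ c') ∨ (c = a' ∧ b ≠ b' ∧ b ≠ c'))) := by
  rw [dist_sq_vec a b c a' b' c' hab hac hbc hab' hac' hbc']
  have ca : (vec a' b' c' a = 1 ∧ (a = b' ∨ a = c')) ∨ vec a' b' c' a ≤ 0 := by
    rw [vec_apply]; split_ifs with h1 h2
    · right; norm_num
    · left; exact ⟨rfl, h2⟩
    · right; norm_num
  have cb : ∀ b, (vec a' b' c' b = -1 ∧ b = a') ∨ (vec a' b' c' b = 0 ∧ b ≠ a' ∧ b ≠ b' ∧ b ≠ c') ∨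
      (vec a' b' c' b = 1 ∧ b ≠ a') := by
    intro b
    rw [vec_apply]; split_ifs with h1 h2
    · left; exact ⟨rfl, h1⟩
    · right; right; exact ⟨rfl, h1⟩
    · right; left; push Not at h2; exact ⟨rfl, h1, h2⟩
  have ca1 : vec a' b' c' a ≤ 1 := by
    rcases ca with h | h
    · exact h.1.le
    · linarith
  rcases cb b with ⟨v, hb⟩ | ⟨v, hb⟩ | ⟨v, hb⟩ <;> rcases cb c with ⟨w, hc⟩ | ⟨w, hc⟩ | ⟨w, hc⟩
  · exact absurd (hb.trans hc.symm) hbc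
  · rcases ca with ⟨u, h⟩ | h
    · right; rw [u, v, w]; exact ⟨by norm_num, h, Or.inl ⟨hb, hc.2⟩⟩
    · left; linarith
  · left; linarith
  · rcases ca with ⟨u, h⟩ | h
    · right; rw [u, v, w]; exact ⟨by norm_num, h, Or.inr ⟨hc, hb.2⟩⟩
    · left; linarith
  all_goals left; linarith

lemma L_finite (k : ℕ) : (L 1 k 2).Finite := by
  refine (Set.finite_range (fun t : Fin (1+k+2) × Fin (1+k+2) × Fin (1+k+2) =>
    vec t.1 t.2.1 t.2.2)).subset ?_
  intro x hx
  obtain ⟨a, b, c, _, _, _, rfl⟩ := exists_vec_of_mem_L x hx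
  exact ⟨(a, b, c), rfl⟩

lemma diam_L_le (k : ℕ) : Metric.diam (L 1 k 2) ≤ √10 := by
  apply Metric.diam_le_of_forall_dist_le (Real.sqrt_nonneg _)
  intro x hx y hy
  obtain ⟨a, b, c, h1, h2, h3, rfl⟩ := exists_vec_of_mem_L x hx
  obtain ⟨a', b', c', h1', h2', h3', rfl⟩ := exists_vec_of_mem_L y hy
  apply Real.le_sqrt_of_sq_le
  rcases dist_cases a b c a' b' c' h1 h2 h3 h1' h2' h3' with h | h
  · linarith
  · exact h.1.le

lemma dist_conflict {n : ℕ} (a b c d : Fin n) (hab : a ≠ b) (hac : a ≠ c) (hbc : b ≠ c)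
    (had : a ≠ d) (hbd : b ≠ d) (hcd : c ≠ d) : dist (vec a b c) (vec b a d) = √10 := by
  have h := dist_sq_vec a b c b a d hab hac hbc hab.symm hbd had
  have h1 : vec b a d a = 1 := by simp [vec_apply, hab]
  have h2 : vec b a d b = -1 := by simp [vec_apply]
  have h3 : vec b a d c = 0 := by simp [vec_apply, hbc.symm, hac.symm, hcd]
  rw [h1, h2, h3] at h
  rw [← Real.sqrt_sq (dist_nonneg (x := vec a b c) (y := vec b a d)), h]
  norm_num

lemma le_diam_L (k : ℕ) (hk : 1 ≤ k) : √10 ≤ Metric.diam (L 1 k 2) := by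
  have hne : ∀ i j : Fin 4, i ≠ j →
      (Fin.castLE (by omega) i : Fin (1+k+2)) ≠ Fin.castLE (by omega) j := by
    intro i j h h'
    exact h (Fin.castLE_injective _ h')
  have h01 := hne 0 1 (by decide)
  have h02 := hne 0 2 (by decide)
  have h03 := hne 0 3 (by decide)
  have h12 := hne 1 2 (by decide)
  have h13 := hne 1 3 (by decide)
  have h23 := hne 2 3 (by decide)
  rw [← dist_conflict _ _ _ _ h01 h02 h12 h03 h13 h23]
  exact Metric.dist_le_diam_of_mem (L_finite k).isBounded
    (mem_L_of_vec _ _ _ h01 h02 h12) (mem_L_of_vec _ _ _ h01.symm h13 h03)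

lemma choose_six (k : ℕ) : ((k:ℤ)+3) * (k+2) * (k+1) = 6 * ((k+3).choose 3 : ℕ) := by
  have := Nat.descFactorial_eq_factorial_mul_choose (k+3) 3
  simp [Nat.descFactorial, Nat.factorial] at this
  zify at this
  linarith

lemma upper (k : ℕ) (X : Set (EuclideanSpace ℝ (Fin (1+k+2)))) (hX : X ⊆ L 1 k 2)
    (hd : Metric.diam X < √10) : X.ncard ≤ Nat.choose (k+3) 3 + 2 := by
  have hf : X.Finite := (L_finite k).subset hX
  set S : Finset (Fin (1+k+2) × Fin (1+k+2) × Fin (1+k+2)) := Finset.univ.filter fun t =>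
    t.1 ≠ t.2.1 ∧ t.1 ≠ t.2.2 ∧ t.2.1 ≠ t.2.2 ∧ vec t.1 t.2.1 t.2.2 ∈ X with hS
  have mS : ∀ a b c, (a, b, c) ∈ S ↔ a ≠ b ∧ a ≠ c ∧ b ≠ c ∧ vec a b c ∈ X := by
    intro a b c; simp [hS]
  have main := comb_main _ S rfl
    (by
      intro a b c h
      rw [mS] at h ⊢
      rw [← vec_swap]
      exact ⟨h.2.1, h.1, h.2.2.1.symm, h.2.2.2⟩)
    (by
      intro a b c h
      rw [mS] at h
      exact ⟨h.1, h.2.2.1⟩)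
    (by
      intro a b c d h1 h2
      rw [mS] at h1 h2
      by_contra hcd
      have := Metric.dist_le_diam_of_mem hf.isBounded h1.2.2.2 h2.2.2.2
      rw [dist_conflict a b c d h1.1 h1.2.1 h1.2.2.1 h2.2.2.1 h2.2.1 hcd] at this
      linarith)
  have hc : 2 * hf.toFinset.card ≤ S.card := by
    rw [Finset.card_eq_sum_card_fiberwise (s := S) (t := hf.toFinset)
      (f := fun t => vec t.1 t.2.1 t.2.2)]
    · rw [mul_comm, ← smul_eq_mul]
      apply Finset.card_nsmul_le_sum
      intro x hx
      have hx' : x ∈ X := by simpa using hx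
      obtain ⟨a, b, c, h1, h2, h3, rfl⟩ := exists_vec_of_mem_L x (hX hx')
      have : ({(a, b, c), (a, c, b)} : Finset (Fin (1+k+2) × Fin (1+k+2) × Fin (1+k+2))).card = 2 := by
        rw [Finset.card_pair]; simp [h3]
      refine this.symm.le.trans ?_
      apply Finset.card_le_card
      intro t ht
      simp only [Finset.mem_insert, Finset.mem_singleton] at ht
      rcases ht with rfl | rfl
      · simp only [Finset.mem_filter, mS, and_true]
        exact ⟨h1, h2, h3, hx'⟩
      · simp only [Finset.mem_filter, mS]
        rw [← vec_swap]
        exact ⟨⟨h2, h1, h3.symm, hx'⟩, rfl⟩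
    · rintro ⟨a, b, c⟩ ht
      have := (mS a b c).1 ht
      simpa using this.2.2.2
  rw [Set.ncard_eq_toFinset_card X hf]
  have h6 := choose_six k
  simp only [Fintype.card_fin] at main
  push_cast at main
  have : ((1:ℤ) + k + 2) * (1 + k + 2 - 1) * (1 + k + 2 - 2) = (k+3)*(k+2)*(k+1) := by ring
  rw [this, h6] at main
  zify at hc ⊢
  linarith

lemma Xk_sub (k : ℕ) : Xk k ⊆ L 1 k 2 := by
  rintro x (h | h)
  · exact h.1
  · simp only [Set.mem_iUnion] at h
    obtain ⟨i, _, h⟩ := h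
    exact h.1

lemma Xk_cond {k : ℕ} (a b c : Fin (1+k+2)) (hab : a ≠ b) (hac : a ≠ c)
    (h : vec a b c ∈ Xk k) :
    (a.val < b.val ∧ a.val < c.val) ∨ (k ≤ a.val ∧ k ≤ b.val ∧ k ≤ c.val ∧ a.val ≠ k) := by
  have va : vec a b c a = -1 := by simp [vec_apply]
  have vb : vec a b c b = 1 := by simp [vec_apply, hab.symm]
  have vc : vec a b c c = 1 := by simp [vec_apply, hac.symm]
  rcases h with h | h
  · right
    obtain ⟨_, h1, h2⟩ := h
    refine ⟨?_, ?_, ?_, ?_⟩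
    · by_contra hh
      have := h1 a (by omega); rw [va] at this; norm_num at this
    · by_contra hh
      have := h1 b (by omega); rw [vb] at this; norm_num at this
    · by_contra hh
      have := h1 c (by omega); rw [vc] at this; norm_num at this
    · intro hh
      have := h2 a hh; rw [va] at this; norm_num at this
  · left
    simp only [Set.mem_iUnion] at h
    obtain ⟨i, hi, _, h1, h2⟩ := h
    have hi' : i < k + 1 := by simpa using hi
    have hb : ¬ b.val ≤ i := by
      intro hh
      rcases hh.lt_or_eq with hh | hh
      · have := h1 b hh; rw [vb] at this; norm_num at this
      · have := h2 b hh; rw [vb] at this; norm_num at this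
    have hc : ¬ c.val ≤ i := by
      intro hh
      rcases hh.lt_or_eq with hh | hh
      · have := h1 c hh; rw [vc] at this; norm_num at this
      · have := h2 c hh; rw [vc] at this; norm_num at this
    have ha : a.val ≤ i := by
      have := h2 ⟨i, by omega⟩ rfl
      rw [vec_apply] at this
      split_ifs at this with g
      · rw [← g]
      all_goals norm_num at this
    omega

lemma Xk_diam (k : ℕ) : Metric.diam (Xk k) < √10 := by
  have : Metric.diam (Xk k) ≤ √8 := by
    apply Metric.diam_le_of_forall_dist_le (Real.sqrt_nonneg _)
    intro x hx y hy
    obtain ⟨a, b, c, h1, h2, h3, rfl⟩ := exists_vec_of_mem_L x (Xk_sub k hx)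
    obtain ⟨a', b', c', h1', h2', h3', rfl⟩ := exists_vec_of_mem_L y (Xk_sub k hy)
    apply Real.le_sqrt_of_sq_le
    rcases dist_cases a b c a' b' c' h1 h2 h3 h1' h2' h3' with h | ⟨_, h⟩
    · exact h
    · exfalso
      have q1 := Xk_cond _ _ _ h1 h2 hx
      have q2 := Xk_cond _ _ _ h1' h2' hy
      simp only [Fin.ext_iff, ne_eq] at *
      have := a.2
      have := b.2
      have := c.2
      have := a'.2
      have := b'.2
      have := c'.2
      omega
  exact this.trans_lt (Real.sqrt_lt_sqrt (by norm_num) (by norm_num))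

lemma Xk_lower (k : ℕ) : Nat.choose (k+3) 3 + 2 ≤ (Xk k).ncard := by
  have hfin : (Xk k).Finite := (L_finite k).subset (Xk_sub k)
  set S : Set (EuclideanSpace ℝ (Fin (1+k+2))) := ⋃ i ∈ Finset.range (k+1), Sset k i with hS
  have hSX : S ⊆ Xk k := Set.subset_union_right
  have hSf : S.Finite := hfin.subset hSX
  have hSmem : ∀ a b c : Fin (1+k+2), a < b → a < c → b ≠ c → vec a b c ∈ S := by
    intro a b c hab hac hbc
    simp only [hS, Set.mem_iUnion]
    refine ⟨a.val, ?_, mem_L_of_vec a b c hab.ne hac.ne hbc, ?_, ?_⟩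
    · simp only [Finset.mem_range]
      have := b.2; have := c.2
      have : b.val ≠ c.val := fun h => hbc (Fin.ext h)
      rw [Fin.lt_def] at hab hac
      omega
    · intro j hj
      rw [Fin.lt_def] at hab hac
      rw [vec_apply, if_neg, if_neg]
      · simp only [Fin.ext_iff]; omega
      · simp only [Fin.ext_iff]; omega
    · intro j hj
      rw [vec_apply, if_pos (Fin.ext hj)]
  set supp : EuclideanSpace ℝ (Fin (1+k+2)) → Finset (Fin (1+k+2)) :=
    fun x => Finset.univ.filter fun i => x i ≠ 0 with hsupp
  have hc : Nat.choose (k+3) 3 ≤ S.ncard := by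
    have h1 : (↑(Finset.powersetCard 3 (Finset.univ : Finset (Fin (1+k+2)))) :
        Set (Finset (Fin (1+k+2)))) ⊆ supp '' S := by
      intro s hs
      have hs3 : s.card = 3 := by simpa [Finset.mem_powersetCard] using hs
      have hne : s.Nonempty := Finset.card_pos.1 (by omega)
      set a := s.min' hne with ha
      have has : a ∈ s := Finset.min'_mem _ _
      have he : (s.erase a).card = 2 := by rw [Finset.card_erase_of_mem has, hs3]
      obtain ⟨b, c, hbc, hb⟩ := Finset.card_eq_two.1 he
      have bm : b ∈ s.erase a := by rw [hb]; simp
      have cm : c ∈ s.erase a := by rw [hb]; simp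
      have hab : a < b := Finset.min'_lt_of_mem_erase_min' s hne bm
      have hac : a < c := Finset.min'_lt_of_mem_erase_min' s hne cm
      refine ⟨vec a b c, hSmem a b c hab hac hbc, ?_⟩
      rw [← Finset.insert_erase has, hb]
      ext i
      simp only [hsupp]
      rw [Finset.mem_filter, vec_apply]
      simp only [Finset.mem_univ, true_and, Finset.mem_insert, Finset.mem_singleton]
      split_ifs with h h'
      · simp [h]
      · simp [h']
      · simp [h, h']
    have h2 := Set.ncard_le_ncard h1 (hSf.image _)
    rw [Set.ncard_coe_finset, Finset.card_powersetCard, Finset.card_univ, Fintype.card_fin] at h2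
    have h3 := Set.ncard_image_le (f := supp) hSf
    have : (1 + k + 2).choose 3 = (k + 3).choose 3 := congrArg (fun m => Nat.choose m 3) (by omega)
    omega
  set p : Fin (1+k+2) := ⟨k, by omega⟩ with hp
  set q : Fin (1+k+2) := ⟨k+1, by omega⟩ with hq
  set r : Fin (1+k+2) := ⟨k+2, by omega⟩ with hr
  have hpq : p ≠ q := by simp [hp, hq]
  have hpr : p ≠ r := by simp [hp, hr]
  have hqr : q ≠ r := by simp [hq, hr]
  have hT : ∀ a c : Fin (1+k+2), k < a.val → k < c.val → a ≠ c → vec a p c ∈ Tset k k := by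
    intro a c ha hc hac
    have hap : a ≠ p := by intro h; rw [h] at ha; simp [hp] at ha
    have hcp : c ≠ p := by intro h; rw [h] at hc; simp [hp] at hc
    refine ⟨mem_L_of_vec _ _ _ hap hac hcp.symm, ?_, ?_⟩
    · intro j hj
      rw [vec_apply, if_neg, if_neg]
      · simp only [Fin.ext_iff, hp]; omega
      · simp only [Fin.ext_iff]; omega
    · intro j hj
      have : j = p := Fin.ext hj
      rw [this, vec_apply, if_neg hap.symm, if_pos (Or.inl rfl)]
  have hnS : ∀ x ∈ Tset k k, x ∉ S := by
    intro x hx hxS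
    simp only [hS, Set.mem_iUnion] at hxS
    obtain ⟨i, hi, _, _, h2⟩ := hxS
    have hi' : i < k + 1 := by simpa using hi
    obtain ⟨_, h3, h4⟩ := hx
    have e := h2 ⟨i, by omega⟩ rfl
    rcases (Nat.lt_succ_iff.1 hi').lt_or_eq with hh | hh
    · rw [h3 ⟨i, by omega⟩ hh] at e; norm_num at e
    · rw [h4 ⟨i, by omega⟩ hh] at e; norm_num at e
  have t1 := hT q r (by simp [hq]) (by simp [hr]) hqr
  have t2 := hT r q (by simp [hr]) (by simp [hq]) hqr.symm
  have hne : vec q p r ≠ vec r p q := by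
    intro h
    have := congrArg (fun x => x q) h
    simp [vec_apply, hqr] at this
    norm_num at this
  have hdis : Disjoint S {vec q p r, vec r p q} := by
    rw [Set.disjoint_right]
    rintro x (rfl | rfl)
    · exact hnS _ t1
    · exact hnS _ t2
  have hu := Set.ncard_union_eq hdis hSf (Set.toFinite _)
  rw [Set.ncard_pair hne] at hu
  have hsub : S ∪ {vec q p r, vec r p q} ⊆ Xk k := by
    apply Set.union_subset hSX
    rintro x (rfl | rfl)
    · exact Or.inl t1
    · exact Or.inl t2
  have := Set.ncard_le_ncard hsub hfin
  omega

theorem stmt_17 (k : ℕ) (hk : 1 ≤ k) :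
    (∀ X ⊆ L 1 k 2, Metric.diam X < Metric.diam (L 1 k 2) →
      X.ncard ≤ Nat.choose (k+3) 3 + 2) ∧
    Xk k ⊆ L 1 k 2 ∧ Metric.diam (Xk k) < Metric.diam (L 1 k 2) ∧
    (Xk k).ncard = Nat.choose (k+3) 3 + 2 := by
  refine ⟨fun X hX hd => upper k X hX (hd.trans_le (diam_L_le k)), Xk_sub k,
    (Xk_diam k).trans_le (le_diam_L k hk), le_antisymm ?_ (Xk_lower k)⟩
  exact upper k _ (Xk_sub k) (Xk_diam k)
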